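/- Let M be a finitely generated FI-module over ℂ. Then there exist integers n, N and a polynomial X ∈ ℚ[a_1,…,a_n] (the character polynomial of M) such that for every partition μ with |μ| > N, the trace of M(σ_μ) on M_{|μ|} equals X(m_1(μ),…,m_n(μ)), where σ_μ ∈ S_{|μ|} is any permutation of cycle type μ. -/

import Mathlib

open CategoryTheory

structure FIObj where
  α : Type
  fin : Fintype α

instance (S : FIObj) : Fintype S.α := S.fin

def FIObj.of (α : Type) [Fintype α] : FIObj := ⟨α, inferInstance⟩

instance : Category FIObj where
  Hom S T := {f : S.α → T.α // Function.Injective f}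
  id S := ⟨id, Function.injective_id⟩
  comp f g := ⟨g.1 ∘ f.1, g.2.comp f.2⟩

/-- FI-modules over ℂ: functors from FI to ℂ-vector spaces. -/
abbrev FIMod := FIObj ⥤ ModuleCat.{0} ℂ

/-- A sub-FI-module. -/
structure FISub (M : FIMod) where
  carrier : ∀ S : FIObj, Submodule ℂ (M.obj S)
  map_mem : ∀ {S T : FIObj} (f : S ⟶ T) (x : M.obj S), x ∈ carrier S → M.map f x ∈ carrier T

/-- A finitely generated FI-module. -/
def FIMod.FG (M : FIMod) : Prop :=
  ∃ (k : ℕ) (S : Fin k → FIObj) (m : ∀ i, M.obj (S i)),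
    ∀ N : FISub M, (∀ i, m i ∈ N.carrier (S i)) → ∀ T, N.carrier T = ⊤
/-- The trace of the automorphism of `M_n = M({1,…,n})` induced by a permutation σ. -/
noncomputable def traceOfPerm (M : FIMod) (n : ℕ) (σ : Equiv.Perm (Fin n)) : ℂ :=
  LinearMap.trace ℂ (M.obj (FIObj.of (Fin n))) ((M.map (⟨σ, σ.injective⟩ :
    FIObj.of (Fin n) ⟶ FIObj.of (Fin n))).hom)

/-!
Induct on `d` for `M` generated in degrees less than `d + 1`. As `a` grows, the elements of `M_d`
that become generated in degrees less than `d` inside the shift `S ↦ M(S ⊔ {1, …, a})` stabilise,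
because `M_d` is Noetherian. For such an `a`, the quotient of the shift by its part `L` generated
in degrees less than `d` is induced from a representation of `S_d`. The character of an induced
FI-module is a rational combination of the numbers of injections intertwining a permutation of
`{1, …, d}` with the given permutation: characters of symmetric groups are rational, and these
numbers are products over cycles, hence polynomials in the numbers of cycles.

Both `L` and the cokernel of `M → shift` are generated in degrees less than `d`, so the induction
hypothesis applies to them. Injections act injectively on induced FI-modules, hence in large
degrees on the shift and then on `M`, so `M → shift` is eventually injective and the character of
`M` is that of the shift minus that of the cokernel.
-/

universe u w

section TraceExact

variable {k U V W : Type*} [Field k] [AddCommGroup U] [AddCommGroup V] [AddCommGroup W]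
  [Module k U] [Module k V] [Module k W] [FiniteDimensional k U] [FiniteDimensional k V]
  [FiniteDimensional k W]

theorem trace_eq_add_of_exact {i : U →ₗ[k] V} {p : V →ₗ[k] W} (hi : Function.Injective i)
    (hp : Function.Surjective p) (hip : Function.Exact i p) {a : Module.End k U}
    {b : Module.End k V} {c : Module.End k W} (hab : b ∘ₗ i = i ∘ₗ a) (hbc : p ∘ₗ b = c ∘ₗ p) :
    LinearMap.trace k V b = LinearMap.trace k U a + LinearMap.trace k W c := by
  obtain ⟨s, hs⟩ := p.exists_rightInverse_of_surjective (LinearMap.range_eq_top.2 hp)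
  obtain ⟨r, hr⟩ := i.exists_leftInverse_of_injective (LinearMap.ker_eq_bot.2 hi)
  let q : V →ₗ[k] U := r ∘ₗ (LinearMap.id - s ∘ₗ p)
  have decomposition : i ∘ₗ q + s ∘ₗ p = LinearMap.id := by
    ext v
    obtain ⟨u, hu⟩ := (hip (v - s (p v))).1 (by
      rw [map_sub, ← LinearMap.comp_apply p s, hs, LinearMap.id_apply, sub_self])
    have hru : r (i u) = u := LinearMap.congr_fun hr u
    have hqv : q v = u := by
      rw [LinearMap.comp_apply, LinearMap.sub_apply, LinearMap.id_apply, LinearMap.comp_apply,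
        ← hu, hru]
    rw [LinearMap.add_apply, LinearMap.comp_apply, hqv, hu, LinearMap.comp_apply,
      LinearMap.id_apply, sub_add_cancel]
  have hqi : q ∘ₗ i = LinearMap.id := by
    rw [LinearMap.comp_assoc, LinearMap.sub_comp, LinearMap.comp_assoc, hip.linearMap_comp_eq_zero,
      LinearMap.comp_zero, sub_zero, LinearMap.id_comp, hr]
  have hb : b = (i ∘ₗ a) ∘ₗ q + (b ∘ₗ s) ∘ₗ p := by
    rw [← hab, LinearMap.comp_assoc, LinearMap.comp_assoc, ← LinearMap.comp_add, decomposition,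
      LinearMap.comp_id]
  have trace_sub : LinearMap.trace k V ((i ∘ₗ a) ∘ₗ q) = LinearMap.trace k U a := by
    rw [LinearMap.trace_comp_comm', ← LinearMap.comp_assoc, hqi, LinearMap.id_comp]
  have trace_quotient : LinearMap.trace k V ((b ∘ₗ s) ∘ₗ p) = LinearMap.trace k W c := by
    rw [LinearMap.trace_comp_comm', ← LinearMap.comp_assoc, hbc, LinearMap.comp_assoc, hs,
      LinearMap.comp_id]
  rw [hb, map_add, trace_sub, trace_quotient]

end TraceExact

section RationalCharacters

theorem coprime_orderOf_of_orderOf_pow_eq {G : Type*} [Monoid G] {g : G} (hg : 0 < orderOf g)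
    {j : ℕ} (hj : orderOf (g ^ j) = orderOf g) : j.Coprime (orderOf g) := by
  rw [(orderOf_pos_iff.1 hg).orderOf_pow, Nat.div_eq_self] at hj
  exact Nat.Coprime.symm (hj.resolve_left hg.ne')

variable {k : Type*} [Field k] [CharZero k]

theorem sum_zpowers_character {G V : Type*} [Group G] [AddCommGroup V] [Module k V]
    [FiniteDimensional k V] (ρ : Representation k G V) (g : G) [Fintype (Subgroup.zpowers g)] :
    ∑ h : Subgroup.zpowers g, ρ.character (h : G) =
      orderOf g * Module.finrank k
        (Representation.invariants (ρ.comp (Subgroup.zpowers g).subtype)) := by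
  have card_ne_zero : (Nat.card (Subgroup.zpowers g) : k) ≠ 0 :=
    Nat.cast_ne_zero.2 Nat.card_pos.ne'
  have : Invertible (Nat.card (Subgroup.zpowers g) : k) := invertibleOfNonzero card_ne_zero
  rw [← Representation.card_inv_mul_sum_char_eq_finrank, ← Nat.card_zpowers,
    mul_inv_cancel_left₀ card_ne_zero]
  rfl

-- The powers of `g` of the same order as `g` contribute equal amounts to the sum of the character
-- over `⟨g⟩`, and the others are rational by induction on the order.
theorem character_mem_fieldRange_of_isConj_pow {G V : Type*} [Group G] [Finite G]
    [AddCommGroup V] [Module k V] [FiniteDimensional k V] (ρ : Representation k G V)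
    (hG : ∀ (g : G) (j : ℕ), j.Coprime (orderOf g) → IsConj (g ^ j) g) (g : G) :
    ρ.character g ∈ (Rat.castHom k).fieldRange := by
  classical
  induction hn : orderOf g using Nat.strong_induction_on generalizing g with
  | _ n ih =>
  subst hn
  let := Fintype.ofFinite (Subgroup.zpowers g)
  let generators : Finset (Subgroup.zpowers g) := {h | orderOf (h : G) = orderOf g}
  have generators_sum : ∑ h ∈ generators, ρ.character (h : G) =
      generators.card * ρ.character g := by
    rw [← nsmul_eq_mul, ← Finset.sum_const]
    refine Finset.sum_congr rfl fun h hh => ?_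
    obtain ⟨j, hj⟩ := mem_powers_iff_mem_zpowers.2 h.2
    have hcop : j.Coprime (orderOf g) := coprime_orderOf_of_orderOf_pow_eq (orderOf_pos g) <| by
      rw [show g ^ j = h from hj, (Finset.mem_filter.1 hh).2]
    obtain ⟨c, hc⟩ := isConj_iff.1 (hG g j hcop)
    calc ρ.character (h : G) = ρ.character (g ^ j) := congrArg _ hj.symm
      _ = ρ.character (c * g ^ j * c⁻¹) := (ρ.char_conj _ _).symm
      _ = ρ.character g := congrArg _ hc
  have others_mem : ∑ h ∈ generatorsᶜ, ρ.character (h : G) ∈ (Rat.castHom k).fieldRange := by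
    refine sum_mem fun h hh => ih _ (lt_of_le_of_ne ?_ ?_) h rfl
    · exact Nat.le_of_dvd (orderOf_pos g) (orderOf_dvd_of_mem_zpowers h.2)
    · exact fun h_eq => Finset.mem_compl.1 hh (Finset.mem_filter.2 ⟨Finset.mem_univ _, h_eq⟩)
  have generators_card : (generators.card : k) ≠ 0 :=
    Nat.cast_ne_zero.2 (Finset.card_ne_zero_of_mem (a := ⟨g, Subgroup.mem_zpowers g⟩)
      (Finset.mem_filter.2 ⟨Finset.mem_univ _, rfl⟩))
  have total := sum_zpowers_character ρ g
  rw [← Finset.sum_add_sum_compl generators, generators_sum, ← eq_sub_iff_add_eq] at total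
  rw [eq_div_of_mul_eq generators_card ((mul_comm _ _).trans total)]
  exact div_mem (sub_mem (mul_mem (natCast_mem _ _) (natCast_mem _ _)) others_mem)
    (natCast_mem _ _)

end RationalCharacters

section Dynamics

open Function

variable {α β : Type*} {f : α → α} {h : β → β}

theorem minimalPeriod_apply_of_semiconj {g : α → β} (hg : Injective g) (hgf : Semiconj g f h)
    (x : α) : minimalPeriod h (g x) = minimalPeriod f x := by
  refine minimalPeriod_eq_minimalPeriod_iff.2 fun n => ?_
  rw [IsPeriodicPt, IsPeriodicPt, IsFixedPt, IsFixedPt, ← (hgf.iterate_right n).eq, hg.eq_iff]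

theorem iterate_eq_iterate_iff_modEq {x : α} (hx : x ∈ periodicPts f) {i j : ℕ} :
    f^[i] x = f^[j] x ↔ i ≡ j [MOD minimalPeriod f x] := by
  have hpos := minimalPeriod_pos_of_mem_periodicPts hx
  rw [← iterate_mod_minimalPeriod_eq (n := i), ← iterate_mod_minimalPeriod_eq (n := j)]
  exact iterate_eq_iterate_iff_of_lt_minimalPeriod (Nat.mod_lt _ hpos) (Nat.mod_lt _ hpos)

theorem minimalPeriod_iterate_of_coprime {x : α} (hx : x ∈ periodicPts f) {j : ℕ}
    (hj : (minimalPeriod f x).Coprime j) : minimalPeriod f^[j] x = minimalPeriod f x := by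
  rw [minimalPeriod_iterate_eq_div_gcd' hx, hj, Nat.div_one]

end Dynamics

section CycleType

open Equiv Function

variable {α : Type*} [Fintype α] [DecidableEq α]

theorem minimalPeriod_eq_card_support_cycleOf {σ : Perm α} {x : α} (hx : x ∈ σ.support) :
    minimalPeriod σ x = (σ.cycleOf x).support.card := by
  have hcycle := Perm.isCycle_cycleOf σ (Perm.mem_support.1 hx)
  rw [← hcycle.orderOf, orderOf, minimalPeriod_eq_minimalPeriod_iff]
  intro n
  rw [isPeriodicPt_mul_iff_pow_eq_one, hcycle.pow_eq_one_iff' (x := x)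
      (by rwa [Perm.cycleOf_apply_self, ← Perm.mem_support]),
    Perm.cycleOf_pow_apply_self, IsPeriodicPt, IsFixedPt, Perm.iterate_eq_pow]

theorem mem_support_of_minimalPeriod_ne_one {σ : Perm α} {x : α} (hx : minimalPeriod σ x ≠ 1) :
    x ∈ σ.support :=
  Perm.mem_support.2 fun h => hx (minimalPeriod_eq_one_iff_isFixedPt.2 h)

theorem filter_minimalPeriod_cycleOf_eq {σ c : Perm α} (hc : c ∈ σ.cycleFactorsFinset) {l : ℕ}
    (hl : c.support.card = l) (h1 : l ≠ 1) :
    ({x | minimalPeriod σ x = l ∧ σ.cycleOf x = c} : Finset α) = c.support := by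
  ext x
  simp only [Finset.mem_filter, Finset.mem_univ, true_and]
  constructor
  · rintro ⟨hx, rfl⟩
    exact Perm.mem_support_cycleOf_iff.2
      ⟨.refl _ _, mem_support_of_minimalPeriod_ne_one (hx ▸ h1)⟩
  · intro hx
    have hcx := Perm.cycle_is_cycleOf hx hc
    have hxσ : x ∈ σ.support := Perm.mem_cycleFactorsFinset_support_le hc hx
    exact ⟨by rw [minimalPeriod_eq_card_support_cycleOf hxσ, ← hcx, hl], hcx.symm⟩

theorem card_minimalPeriod_eq_mul_count_cycleType (σ : Perm α) {l : ℕ} (hl : l ≠ 1) :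
    Finset.card {x | minimalPeriod σ x = l} = l * σ.cycleType.count l := by
  rw [Perm.cycleType_def, Multiset.count_map, ← Finset.filter_val, Finset.card_val, mul_comm]
  refine (Finset.card_eq_sum_card_fiberwise (f := σ.cycleOf) fun x hx => ?_).trans
    (Finset.sum_const_nat fun c hc => ?_)
  · have hxl : minimalPeriod σ x = l := by simpa using hx
    have hxσ := mem_support_of_minimalPeriod_ne_one (hxl ▸ hl)
    simpa [Perm.cycleOf_mem_cycleFactorsFinset_iff, Perm.mem_support.1 hxσ, ← hxl] using
      minimalPeriod_eq_card_support_cycleOf hxσ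
  · obtain ⟨hc, hcl⟩ := Finset.mem_filter.1 hc
    rw [Finset.filter_filter, filter_minimalPeriod_cycleOf_eq hc hcl.symm hl, hcl]
    rfl

theorem card_minimalPeriod_eq_mul_count_partition (σ : Perm α) (l : ℕ) :
    Finset.card {x | minimalPeriod σ x = l} = l * σ.partition.parts.count l := by
  rw [Perm.parts_partition, Multiset.count_add]
  obtain rfl | hl := eq_or_ne l 1
  · have fixed : ({x | minimalPeriod σ x = 1} : Finset α) = σ.supportᶜ := by
      ext x
      simp [minimalPeriod_eq_one_iff_isFixedPt, IsFixedPt]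
    rw [fixed, Finset.card_compl, Multiset.count_replicate_self, one_mul, right_eq_add,
      Multiset.count_eq_zero]
    exact fun h => absurd (Perm.two_le_of_mem_cycleType h) (by norm_num)
  · rw [Multiset.count_replicate, if_neg hl.symm, add_zero,
      card_minimalPeriod_eq_mul_count_cycleType σ hl]

theorem isConj_pow_of_coprime_orderOf {α : Type*} [Finite α] (σ : Perm α) (j : ℕ)
    (hj : j.Coprime (orderOf σ)) : IsConj (σ ^ j) σ := by
  classical
  let := Fintype.ofFinite α
  have minimalPeriod_pow (x : α) : minimalPeriod (σ ^ j : Perm α) x = minimalPeriod σ x := by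
    have hdvd : minimalPeriod σ x ∣ orderOf σ := IsPeriodicPt.minimalPeriod_dvd <| by
      rw [IsPeriodicPt, IsFixedPt, Perm.iterate_eq_pow, pow_orderOf_eq_one, Perm.one_apply]
    rw [← Perm.iterate_eq_pow, minimalPeriod_iterate_of_coprime (σ.injective.mem_periodicPts x)
      (hj.symm.coprime_dvd_left hdvd)]
  refine Perm.partition_eq_of_isConj.2 (Nat.Partition.ext (Multiset.ext.2 fun l => ?_))
  obtain rfl | hl := Nat.eq_zero_or_pos l
  · simp [Multiset.count_eq_zero.2 fun h => (Nat.Partition.parts_pos _ h).ne rfl]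
  · refine Nat.eq_of_mul_eq_mul_left hl ?_
    simp only [← card_minimalPeriod_eq_mul_count_partition, minimalPeriod_pow]

end CycleType

namespace FIObj

theorem hom_ext {S T : FIObj} {f g : S ⟶ T} (h : ∀ x, f.1 x = g.1 x) : f = g :=
  Subtype.ext (funext h)

noncomputable instance (S T : FIObj) : Fintype (S ⟶ T) :=
  @Fintype.ofFinite _ (inferInstanceAs (Finite {f : S.α → T.α // Function.Injective f}))

/-- A bijection as a morphism of FI. -/
def homOfEquiv {S T : FIObj} (e : S.α ≃ T.α) : S ⟶ T := ⟨e, e.injective⟩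

/-- Disjoint union with a set of `a` further elements, as an endofunctor of FI. -/
def addFin (a : ℕ) : FIObj ⥤ FIObj where
  obj S := FIObj.of (S.α ⊕ Fin a)
  map f := ⟨Sum.map f.1 id, f.2.sumMap Function.injective_id⟩
  map_id _ := hom_ext fun x => congrFun Sum.map_id_id x
  map_comp _ _ := hom_ext fun x => by cases x <;> rfl

/-- The inclusion of `S` into its disjoint union with `a` further elements. -/
def inl (S : FIObj) (a : ℕ) : S ⟶ (addFin a).obj S := ⟨Sum.inl, Sum.inl_injective⟩

theorem comp_inl {S T : FIObj} (f : S ⟶ T) (a : ℕ) :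
    f ≫ inl T a = inl S a ≫ (addFin a).map f := rfl

theorem exists_eq_comp_inl {R S : FIObj} {a : ℕ} {f : R ⟶ (addFin a).obj S}
    (hf : ∀ t, ∃ s, f.1 t = Sum.inl s) : ∃ g : R ⟶ S, f = g ≫ inl S a := by
  choose g hg using hf
  exact ⟨⟨g, fun t u h => f.2 (by rw [hg, hg, h])⟩, hom_ext hg⟩

end FIObj

theorem exists_equiv_sum_fin {A B : Type*} [Finite B] {h : A → B} (hh : Function.Injective h) :
    ∃ (b : ℕ) (e : B ≃ A ⊕ Fin b), ∀ i, e (h i) = Sum.inl i := by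
  classical
  obtain ⟨b, ⟨ε⟩⟩ := Finite.exists_equiv_fin ↥(Set.range h)ᶜ
  let e : A ⊕ Fin b ≃ B :=
    (Equiv.sumCongr (Equiv.ofInjective h hh) ε.symm).trans (Equiv.Set.sumCompl (Set.range h))
  exact ⟨b, e.symm, fun i => e.symm_apply_eq.2 rfl⟩

/-- FI-modules over an arbitrary ring. -/
abbrev FIModule (k : Type u) [Ring k] := FIObj ⥤ ModuleCat.{w} k

section Ring

variable {k : Type u} [Ring k]

namespace FIModule

variable (M : FIModule.{u, w} k)

/-- The linear map `M(f)` induced by an injection `f`. -/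
def act {S T : FIObj} (f : S ⟶ T) : M.obj S →ₗ[k] M.obj T := (M.map f).hom

theorem act_id (S : FIObj) (x : M.obj S) : M.act (𝟙 S) x = x := by
  rw [act, M.map_id, ModuleCat.hom_id, LinearMap.id_apply]

theorem act_comp {R S T : FIObj} (f : R ⟶ S) (g : S ⟶ T) (x : M.obj R) :
    M.act (f ≫ g) x = M.act g (M.act f x) := by
  rw [act, M.map_comp, ModuleCat.hom_comp, LinearMap.comp_apply, act, act]

theorem act_homOfEquiv_symm {S T : FIObj} (e : S.α ≃ T.α) (x : M.obj S) :
    M.act (FIObj.homOfEquiv e.symm) (M.act (FIObj.homOfEquiv e) x) = x := by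
  rw [← act_comp, show FIObj.homOfEquiv e ≫ FIObj.homOfEquiv e.symm = 𝟙 S from
    FIObj.hom_ext e.symm_apply_apply, act_id]

theorem act_homOfEquiv_bijective {S T : FIObj} (e : S.α ≃ T.α) :
    Function.Bijective (M.act (FIObj.homOfEquiv e)) :=
  Function.bijective_iff_has_inverse.2 ⟨M.act (FIObj.homOfEquiv e.symm),
    M.act_homOfEquiv_symm e, M.act_homOfEquiv_symm e.symm⟩

/-- The FI-module `S ↦ M(S ⊔ {1, …, a})`. -/
abbrev shift (a : ℕ) : FIModule.{u, w} k := FIObj.addFin a ⋙ M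

theorem act_inl_act {S T : FIObj} (f : S ⟶ T) (a : ℕ) (x : M.obj S) :
    M.act (FIObj.inl T a) (M.act f x) = (M.shift a).act f (M.act (FIObj.inl S a) x) := by
  rw [← act_comp, FIObj.comp_inl, act_comp]
  rfl

end FIModule

/-- A sub-FI-module. -/
structure SubFIModule (M : FIModule.{u, w} k) where
  carrier : ∀ S : FIObj, Submodule k (M.obj S)
  le_comap : ∀ {S T : FIObj} (f : S ⟶ T), carrier S ≤ (carrier T).comap (M.act f)

namespace SubFIModule

variable {M : FIModule.{u, w} k} (N : SubFIModule M)

/-- A sub-FI-module, as an FI-module. -/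
abbrev toFIModule : FIModule.{u, w} k where
  obj S := ModuleCat.of k (N.carrier S)
  map f := ModuleCat.ofHom ((M.act f).restrict (N.le_comap f))
  map_id S := ModuleCat.hom_ext <| LinearMap.ext fun x => Subtype.ext (M.act_id S x)
  map_comp f g := ModuleCat.hom_ext <| LinearMap.ext fun x => Subtype.ext (M.act_comp f g x)

/-- The quotient of an FI-module by a sub-FI-module. -/
abbrev quotient : FIModule.{u, w} k where
  obj S := ModuleCat.of k (M.obj S ⧸ N.carrier S)
  map f := ModuleCat.ofHom ((N.carrier _).mapQ (N.carrier _) (M.act f) (N.le_comap f))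
  map_id S := ModuleCat.hom_ext <| Submodule.linearMap_qext _ <| LinearMap.ext fun x =>
    congrArg (N.carrier S).mkQ (M.act_id S x)
  map_comp f g := ModuleCat.hom_ext <| Submodule.linearMap_qext _ <| LinearMap.ext fun x =>
    congrArg (N.carrier _).mkQ (M.act_comp f g x)

theorem quotient_act_mkQ {S T : FIObj} (f : S ⟶ T) (x : M.obj S) :
    N.quotient.act f ((N.carrier S).mkQ x) = (N.carrier T).mkQ (M.act f x) := rfl

end SubFIModule

namespace FIModule

variable (M : FIModule.{u, w} k)

/-- The sub-FI-module generated by the `M(R)` with `|R| < d`. -/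
def generatedBelow (d : ℕ) : SubFIModule M where
  carrier S := ⨆ (R : FIObj) (_ : Nat.card R.α < d) (f : R ⟶ S), LinearMap.range (M.act f)
  le_comap {S T} f := by
    simp only [iSup_le_iff]
    rintro R hR g _ ⟨y, rfl⟩
    refine Submodule.mem_iSup_of_mem R (Submodule.mem_iSup_of_mem hR
      (Submodule.mem_iSup_of_mem (g ≫ f) ⟨y, M.act_comp g f y⟩))

/-- `M` is generated in degrees less than `d`. -/
def IsGeneratedBelow (d : ℕ) : Prop := ∀ S, (M.generatedBelow d).carrier S = ⊤

variable {M}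

theorem act_mem_generatedBelow {R S : FIObj} {d : ℕ} (hR : Nat.card R.α < d) (f : R ⟶ S)
    (y : M.obj R) : M.act f y ∈ (M.generatedBelow d).carrier S :=
  Submodule.mem_iSup_of_mem R (Submodule.mem_iSup_of_mem hR (Submodule.mem_iSup_of_mem f ⟨y, rfl⟩))

theorem mem_generatedBelow_of_card_lt {S : FIObj} {d : ℕ} (hS : Nat.card S.α < d) (x : M.obj S) :
    x ∈ (M.generatedBelow d).carrier S := by
  simpa only [act_id] using act_mem_generatedBelow hS (𝟙 S) x

theorem generatedBelow_le_iff {S : FIObj} {d : ℕ} {P : Submodule k (M.obj S)} :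
    (M.generatedBelow d).carrier S ≤ P ↔
      ∀ (R : FIObj) (f : R ⟶ S), Nat.card R.α < d → ∀ y, M.act f y ∈ P := by
  simp only [generatedBelow, iSup_le_iff, LinearMap.range_le_iff_comap, Submodule.eq_top_iff',
    Submodule.mem_comap]
  exact ⟨fun h R f hR y => h R hR f y, fun h R hR f y => h R f hR y⟩

theorem IsGeneratedBelow.eq_top_of_act_mem {d : ℕ} (hM : M.IsGeneratedBelow d) {S : FIObj}
    {P : Submodule k (M.obj S)}
    (h : ∀ (R : FIObj) (f : R ⟶ S), Nat.card R.α < d → ∀ y, M.act f y ∈ P) : P = ⊤ :=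
  top_le_iff.1 (hM S ▸ generatedBelow_le_iff.2 h)

theorem IsGeneratedBelow.subsingleton (hM : M.IsGeneratedBelow 0) (S : FIObj) :
    Subsingleton (M.obj S) :=
  (Submodule.subsingleton_iff k).1 <| subsingleton_of_bot_eq_top <|
    hM.eq_top_of_act_mem fun _ _ h => absurd h (Nat.not_lt_zero _)

theorem isGeneratedBelow_toFIModule_generatedBelow (M : FIModule.{u, w} k) (d : ℕ) :
    (M.generatedBelow d).toFIModule.IsGeneratedBelow d := by
  let N := M.generatedBelow d
  intro S
  have hle : N.carrier S ≤ ((N.toFIModule.generatedBelow d).carrier S).map (N.carrier S).subtype :=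
    generatedBelow_le_iff.2 fun R f hR y =>
      ⟨N.toFIModule.act f ⟨y, mem_generatedBelow_of_card_lt hR y⟩,
        act_mem_generatedBelow hR f _, rfl⟩
  refine Submodule.eq_top_iff'.2 fun x => ?_
  obtain ⟨x', hx', h_eq⟩ := hle x.2
  rwa [← Subtype.ext h_eq]

theorem mkQ_mem_generatedBelow_quotient (N : SubFIModule M) {d : ℕ} {S : FIObj} {x : M.obj S}
    (hx : x ∈ (M.generatedBelow d).carrier S) :
    (N.carrier S).mkQ x ∈ (N.quotient.generatedBelow d).carrier S := by
  refine Submodule.mem_comap.1 (generatedBelow_le_iff.2 (fun R f hR y => ?_) hx)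
  exact act_mem_generatedBelow (M := N.quotient) hR f ((N.carrier R).mkQ y)

theorem isGeneratedBelow_quotient_of_sup_eq_top {N : SubFIModule M} {d : ℕ}
    (h : ∀ S, (M.generatedBelow d).carrier S ⊔ N.carrier S = ⊤) :
    N.quotient.IsGeneratedBelow d := by
  intro S
  refine Submodule.eq_top_iff'.2 fun q => ?_
  obtain ⟨x, rfl⟩ := (N.carrier S).mkQ_surjective q
  obtain ⟨y, hy, z, hz, rfl⟩ := Submodule.mem_sup.1 (h S ▸ Submodule.mem_top : x ∈ _)
  rw [← Submodule.ker_mkQ (N.carrier S), LinearMap.mem_ker] at hz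
  rw [map_add, hz, add_zero]
  exact mkQ_mem_generatedBelow_quotient N hy

theorem IsGeneratedBelow.quotient {d : ℕ} (hM : M.IsGeneratedBelow d) (N : SubFIModule M) :
    N.quotient.IsGeneratedBelow d :=
  isGeneratedBelow_quotient_of_sup_eq_top fun S => by rw [hM S, top_sup_eq]

theorem act_mem_generatedBelow_shift {S T : FIObj} {a d : ℕ} (h : T ⟶ (FIObj.addFin a).obj S)
    (hd : Nat.card {t // ∃ s, h.1 t = Sum.inl s} < d) (z : M.obj T) :
    M.act h z ∈ ((M.shift a).generatedBelow d).carrier S := by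
  classical
  let R : FIObj := ⟨{t // ∃ s, h.1 t = Sum.inl s}, Fintype.ofFinite _⟩
  choose f hf using fun t : R.α => t.2
  let f : R ⟶ S := ⟨f, fun t u htu => Subtype.ext (h.2 (by rw [hf, hf, htu]))⟩
  have factors (t : T.α) : ∃ r : R.α ⊕ Fin a, Sum.map f.1 id r = h.1 t := by
    obtain ⟨s, hs⟩ | ⟨j, hj⟩ : (∃ s, Sum.inl s = h.1 t) ∨ ∃ j, Sum.inr j = h.1 t := by
      cases h.1 t with
      | inl s => exact .inl ⟨s, rfl⟩
      | inr j => exact .inr ⟨j, rfl⟩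
    · exact ⟨Sum.inl ⟨t, s, hs.symm⟩, (hf ⟨t, s, hs.symm⟩).symm⟩
    · exact ⟨Sum.inr j, hj⟩
  choose r hr using factors
  let g : T ⟶ (FIObj.addFin a).obj R := ⟨r, fun t u htu => h.2 (by rw [← hr, ← hr, htu])⟩
  rw [show h = g ≫ (FIObj.addFin a).map f from FIObj.hom_ext fun t => (hr t).symm, act_comp]
  exact act_mem_generatedBelow (M := M.shift a) hd f (M.act g z)

theorem act_mem_generatedBelow_shift_of_notMem {S T : FIObj} {a d : ℕ}
    {h : T ⟶ (FIObj.addFin a).obj S} (hd : Nat.card T.α ≤ d) {t : T.α}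
    (ht : ¬∃ s, h.1 t = Sum.inl s) (z : M.obj T) :
    M.act h z ∈ ((M.shift a).generatedBelow d).carrier S :=
  act_mem_generatedBelow_shift h
    ((Finite.card_subtype_lt (p := fun t => ∃ s, h.1 t = Sum.inl s) ht).trans_le hd) z

theorem generatedBelow_shift_le_comap_act {S T : FIObj} {a b d : ℕ}
    {θ : (FIObj.addFin a).obj S ⟶ (FIObj.addFin b).obj T}
    (hθ : ∀ z t, θ.1 z = Sum.inl t → ∃ s, z = Sum.inl s) :
    ((M.shift a).generatedBelow d).carrier S ≤
      (((M.shift b).generatedBelow d).carrier T).comap (M.act θ) := by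
  refine generatedBelow_le_iff.2 fun R f hR y => ?_
  let h : (FIObj.addFin a).obj R ⟶ (FIObj.addFin b).obj T := (FIObj.addFin a).map f ≫ θ
  have inl_of_inl (z : {z // ∃ t, h.1 z = Sum.inl t}) : ∃ r : R.α, z.1 = Sum.inl r := by
    obtain ⟨r | j, t, ht⟩ := z
    · exact ⟨r, rfl⟩
    · obtain ⟨s, hs⟩ := hθ _ t ht
      cases hs
  choose r hr using inl_of_inl
  have card_le : Nat.card {z // ∃ t, h.1 z = Sum.inl t} ≤ Nat.card R.α :=
    Nat.card_le_card_of_injective r fun z z' h => Subtype.ext (by rw [hr, hr, h])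
  have act_h := act_mem_generatedBelow_shift h (card_le.trans_lt hR) y
  rwa [act_comp] at act_h

theorem IsGeneratedBelow.shift {d : ℕ} (hM : M.IsGeneratedBelow d) (a : ℕ) :
    (M.shift a).IsGeneratedBelow d := fun _ =>
  hM.eq_top_of_act_mem fun _ f hR =>
    act_mem_generatedBelow_shift f ((Finite.card_subtype_le _).trans_lt hR)

theorem IsGeneratedBelow.generatedBelow_shift_sup_range_act_inl {d : ℕ}
    (hM : M.IsGeneratedBelow (d + 1)) (a : ℕ) (S : FIObj) :
    ((M.shift a).generatedBelow d).carrier S ⊔ LinearMap.range (M.act (FIObj.inl S a)) = ⊤ := by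
  refine hM.eq_top_of_act_mem fun R f hR y => ?_
  by_cases hf : ∀ t, ∃ s, f.1 t = Sum.inl s
  · obtain ⟨g, rfl⟩ := FIObj.exists_eq_comp_inl hf
    exact Submodule.mem_sup_right ⟨M.act g y, (M.act_comp _ _ _).symm⟩
  · obtain ⟨t, ht⟩ := not_forall.1 hf
    exact Submodule.mem_sup_left
      (act_mem_generatedBelow_shift_of_notMem (Nat.lt_succ_iff.1 hR) ht y)

end FIModule

end Ring

section EquivariantInjections

open Function

universe v

variable {A B : Type*} {τ : A → A} {σ : B → B}

/-- The injective maps from `A` to `B` intertwining the self-maps `τ` and `σ`. -/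
def EquivariantInjection (τ : A → A) (σ : B → B) := {g : A → B // Injective g ∧ Semiconj g τ σ}

instance [Finite A] [Finite B] : Finite (EquivariantInjection τ σ) :=
  inferInstanceAs (Finite {g : A → B // Injective g ∧ Semiconj g τ σ})

/-- The set of all `τ^j a` with `j ≥ 0`. -/
def forwardOrbit (τ : A → A) (a : A) : Set A := Set.range fun j : ℕ => τ^[j] a

theorem self_mem_forwardOrbit (τ : A → A) (a : A) : a ∈ forwardOrbit τ a := ⟨0, rfl⟩

theorem mapsTo_compl_forwardOrbit (hτ : Injective τ) {a : A} (ha : a ∈ periodicPts τ) :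
    Set.MapsTo τ (forwardOrbit τ a)ᶜ (forwardOrbit τ a)ᶜ := by
  rintro x hx ⟨j, hj⟩
  obtain ⟨m, hm⟩ := Nat.exists_eq_add_one_of_ne_zero
    (Nat.add_pos_right j (minimalPeriod_pos_of_mem_periodicPts ha)).ne'
  refine hx ⟨m, hτ ?_⟩
  rw [← iterate_succ_apply' τ, Nat.succ_eq_add_one, ← hm, iterate_add_minimalPeriod_eq]
  exact hj

theorem iterate_notMem_range_of_semiconj [Finite A] (hτ : Injective τ) (hσ : Injective σ)
    {g : A → B} (hg : Semiconj g τ σ) {b : B} (hb : b ∉ Set.range g) (j : ℕ) :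
    σ^[j] b ∉ Set.range g := by
  rintro ⟨x, hx⟩
  obtain ⟨y, rfl⟩ := (Finite.injective_iff_surjective.1 (hτ.iterate j)) x
  exact hb ⟨y, hσ.iterate j (((hg.iterate_right j).eq y).symm.trans hx)⟩

variable {a : A} (hO : Set.MapsTo τ (forwardOrbit τ a)ᶜ (forwardOrbit τ a)ᶜ)

theorem exists_equivariantInjection_extending [Finite A] [Finite B] (hτ : Injective τ)
    (hσ : Injective σ) (g : EquivariantInjection hO.restrict σ) {b : B}
    (hb : minimalPeriod σ b = minimalPeriod τ a) (hbg : b ∉ Set.range g.1) :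
    ∃ G : EquivariantInjection τ σ, (∀ x : ↥(forwardOrbit τ a)ᶜ, G.1 x = g.1 x) ∧ G.1 a = b := by
  classical
  have iterate_eq_iff (i j : ℕ) : σ^[i] b = σ^[j] b ↔ τ^[i] a = τ^[j] a := by
    rw [iterate_eq_iterate_iff_modEq (hσ.mem_periodicPts b),
      iterate_eq_iterate_iff_modEq (hτ.mem_periodicPts a), hb]
  let G : A → B := extend (fun j => τ^[j] a) (fun j => σ^[j] b) (extend Subtype.val g.1 fun _ => b)
  have G_orbit (j : ℕ) : G (τ^[j] a) = σ^[j] b :=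
    FactorsThrough.extend_apply (f := fun j => τ^[j] a) (fun i j h => (iterate_eq_iff i j).2 h) _ j
  have G_compl (x : ↥(forwardOrbit τ a)ᶜ) : G x = g.1 x := by
    rw [← Subtype.val_injective.extend_apply g.1 (fun _ => b)]
    exact extend_apply' _ _ _ x.2
  have disjoint (j : ℕ) (x : ↥(forwardOrbit τ a)ᶜ) : g.1 x ≠ σ^[j] b := fun h =>
    iterate_notMem_range_of_semiconj (hO.restrict_inj.2 hτ.injOn) hσ g.2.2 hbg j ⟨x, h⟩
  refine ⟨⟨G, fun x y hxy => ?_, fun x => ?_⟩, G_compl, G_orbit 0⟩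
  · by_cases hx : x ∈ forwardOrbit τ a <;> by_cases hy : y ∈ forwardOrbit τ a
    · obtain ⟨⟨i, rfl⟩, ⟨j, rfl⟩⟩ := And.intro hx hy
      exact (iterate_eq_iff i j).1 ((G_orbit i).symm.trans (hxy.trans (G_orbit j)))
    · obtain ⟨i, rfl⟩ := hx
      exact absurd ((G_compl ⟨y, hy⟩).symm.trans (hxy.symm.trans (G_orbit i))) (disjoint i _)
    · obtain ⟨j, rfl⟩ := hy
      exact absurd ((G_compl ⟨x, hx⟩).symm.trans (hxy.trans (G_orbit j))) (disjoint j _)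
    · exact congrArg Subtype.val
        (g.2.1 ((G_compl ⟨x, hx⟩).symm.trans (hxy.trans (G_compl ⟨y, hy⟩))))
  · by_cases hx : x ∈ forwardOrbit τ a
    · obtain ⟨j, rfl⟩ := hx
      change G (τ (τ^[j] a)) = σ (G (τ^[j] a))
      rw [← iterate_succ_apply' τ, G_orbit, G_orbit, iterate_succ_apply']
    · exact (G_compl ⟨τ x, hO hx⟩).trans
        ((g.2.2 ⟨x, hx⟩).trans (congrArg σ (G_compl ⟨x, hx⟩).symm))

/-- An equivariant injection restricts to the complement of the orbit of `a`, and is determined by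
this restriction together with the image of `a`. -/
def EquivariantInjection.restrictCompl (G : EquivariantInjection τ σ) :
    Σ g : EquivariantInjection hO.restrict σ,
      {b // minimalPeriod σ b = minimalPeriod τ a ∧ b ∉ Set.range g.1} :=
  ⟨⟨fun x => G.1 x, G.2.1.comp Subtype.val_injective, fun x => G.2.2 x⟩, G.1 a,
    minimalPeriod_apply_of_semiconj G.2.1 G.2.2 a, fun ⟨x, hx⟩ =>
      x.2 ((G.2.1 hx : (x : A) = a).symm ▸ self_mem_forwardOrbit τ a)⟩

theorem EquivariantInjection.restrictCompl_bijective [Finite A] [Finite B] (hτ : Injective τ)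
    (hσ : Injective σ) : Bijective (restrictCompl (σ := σ) hO) := by
  refine ⟨fun G H h => Subtype.ext (funext fun x => ?_), ?_⟩
  · by_cases hx : x ∈ forwardOrbit τ a
    · obtain ⟨j, rfl⟩ := hx
      have apply_a : G.1 a = H.1 a := congrArg (fun p => p.2.1) h
      change G.1 (τ^[j] a) = H.1 (τ^[j] a)
      rw [(G.2.2.iterate_right j).eq, (H.2.2.iterate_right j).eq, apply_a]
    · exact congrFun (congrArg (fun p => p.1.1) h) ⟨x, hx⟩
  · rintro ⟨g, b, hb, hbg⟩
    obtain ⟨G, hGg, rfl⟩ := exists_equivariantInjection_extending hO hτ hσ g hb hbg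
    obtain rfl : g = (G.restrictCompl hO).1 := Subtype.ext (funext fun x => (hGg x).symm)
    exact ⟨G, rfl⟩

theorem card_minimalPeriod_eq_and_notMem_range [Finite B] {g : A → B} (hg : Injective g)
    (hgτ : Semiconj g τ σ) (l : ℕ) :
    (Nat.card {b // minimalPeriod σ b = l ∧ b ∉ Set.range g} : ℚ) =
      {b | minimalPeriod σ b = l}.ncard - {x | minimalPeriod τ x = l}.ncard := by
  have minimalPeriod_apply := minimalPeriod_apply_of_semiconj hg hgτ
  have set_eq : {b | minimalPeriod σ b = l ∧ b ∉ Set.range g} =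
      {b | minimalPeriod σ b = l} \ g '' {x | minimalPeriod τ x = l} := by
    ext b
    refine and_congr_right fun hb => not_congr ⟨?_, fun ⟨x, _, hx⟩ => ⟨x, hx⟩⟩
    rintro ⟨x, rfl⟩
    exact ⟨x, (minimalPeriod_apply x).symm.trans hb, rfl⟩
  have image_subset : g '' {x | minimalPeriod τ x = l} ⊆ {b | minimalPeriod σ b = l} := by
    rintro _ ⟨x, hx, rfl⟩
    exact (minimalPeriod_apply x).trans hx
  rw [eq_sub_iff_add_eq, ← Set.ncard_sdiff_add_ncard_of_subset image_subset, Nat.cast_add, ← set_eq,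
    Set.ncard_image_of_injective _ hg]
  rfl

theorem card_equivariantInjection_eq_mul [Finite A] [Finite B] (hτ : Injective τ)
    (hσ : Injective σ) :
    (Nat.card (EquivariantInjection τ σ) : ℚ) = Nat.card (EquivariantInjection hO.restrict σ) *
      ({b | minimalPeriod σ b = minimalPeriod τ a}.ncard -
        {x | minimalPeriod hO.restrict x = minimalPeriod τ a}.ncard) := by
  let := Fintype.ofFinite (EquivariantInjection hO.restrict σ)
  rw [Nat.card_eq_of_bijective _ (EquivariantInjection.restrictCompl_bijective hO hτ hσ),
    Nat.card_sigma, Nat.cast_sum, Finset.sum_congr rfl fun g _ =>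
      card_minimalPeriod_eq_and_notMem_range g.2.1 g.2.2 _, Finset.sum_const, nsmul_eq_mul,
    Finset.card_univ, Nat.card_eq_fintype_card]

theorem card_equivariantInjection_of_isEmpty [IsEmpty A] :
    Nat.card (EquivariantInjection τ σ) = 1 := by
  have : Unique (EquivariantInjection τ σ) :=
    { default := ⟨isEmptyElim, injective_of_subsingleton _, isEmptyElim⟩
      uniq := fun _ => Subtype.ext (Subsingleton.elim _ _) }
  exact Nat.card_unique

/-- The number of `l`-cycles of a permutation `σ`, with value `0` for `l = 0`. -/
noncomputable def cycleCount (l : ℕ) (S : FIObj) (σ : S ⟶ S) : ℚ :=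
  {x | minimalPeriod σ.1 x = l}.ncard / l

/-- The functions on all symmetric groups that are polynomials in the numbers of `1`-cycles,
`2`-cycles, …. A permutation of a finite set is encoded as an endomorphism in FI. -/
noncomputable def characterPolynomials : Subalgebra ℚ (∀ S : FIObj, (S ⟶ S) → ℚ) :=
  Algebra.adjoin ℚ (Set.range fun i => cycleCount (i + 1))

theorem cycleCount_mem_characterPolynomials {l : ℕ} (hl : l ≠ 0) :
    cycleCount l ∈ characterPolynomials :=
  Algebra.subset_adjoin ⟨l - 1, congrArg cycleCount (Nat.succ_pred_eq_of_ne_zero hl)⟩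

theorem ncard_minimalPeriod_mem_characterPolynomials {l : ℕ} (hl : l ≠ 0) :
    (fun (S : FIObj) (σ : S ⟶ S) => ({x | minimalPeriod σ.1 x = l}.ncard : ℚ)) ∈
      characterPolynomials := by
  convert characterPolynomials.smul_mem (cycleCount_mem_characterPolynomials hl) (l : ℚ) using 3
  exact (mul_div_cancel₀ _ (Nat.cast_ne_zero.2 hl)).symm

theorem card_equivariantInjection_mem_characterPolynomials {A : Type v} [Finite A] {τ : A → A}
    (hτ : Injective τ) :
    (fun (S : FIObj) (σ : S ⟶ S) => (Nat.card (EquivariantInjection τ σ.1) : ℚ)) ∈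
      characterPolynomials := by
  induction hn : Nat.card A using Nat.strong_induction_on generalizing A with
  | _ n ih =>
  obtain hA | ⟨⟨a⟩⟩ := isEmpty_or_nonempty A
  · simp only [card_equivariantInjection_of_isEmpty, Nat.cast_one]
    exact one_mem _
  · have ha := hτ.mem_periodicPts a
    have hO := mapsTo_compl_forwardOrbit hτ ha
    have complement_mem := ih _
      (hn ▸ Finite.card_subtype_lt (not_not.2 (self_mem_forwardOrbit τ a)))
      (hO.restrict_inj.2 hτ.injOn) rfl
    simp only [fun (S : FIObj) (σ : S ⟶ S) => card_equivariantInjection_eq_mul hO hτ σ.2]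
    exact mul_mem complement_mem (sub_mem (ncard_minimalPeriod_mem_characterPolynomials
      (minimalPeriod_pos_of_mem_periodicPts ha).ne') (characterPolynomials.algebraMap_mem _))

end EquivariantInjections

namespace FIObj

/-- Equivariant injections as morphisms of FI. -/
def equivEquivariantInjection {D S : FIObj} (π : D ⟶ D) (σ : S ⟶ S) :
    {g : D ⟶ S // π ≫ g = g ≫ σ} ≃ EquivariantInjection π.1 σ.1 where
  toFun g := ⟨g.1.1, g.1.2, fun x => congrFun (congrArg Subtype.val g.2) x⟩
  invFun g := ⟨⟨g.1, g.2.1⟩, hom_ext g.2.2⟩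

theorem card_filter_comp_eq_comp {D S : FIObj} (π : D ⟶ D) (σ : S ⟶ S)
    [DecidablePred fun g : D ⟶ S => π ≫ g = g ≫ σ] :
    Finset.card {g : D ⟶ S | π ≫ g = g ≫ σ} = Nat.card (EquivariantInjection π.1 σ.1) := by
  rw [← Fintype.card_subtype, ← Nat.card_eq_fintype_card]
  exact Nat.card_congr (equivEquivariantInjection π σ)

theorem bijective_precomp {D S : FIObj} (π : D ⟶ D) :
    Function.Bijective fun g : D ⟶ S => π ≫ g := by
  rw [← Finite.injective_iff_bijective]
  intro g h hgh
  refine hom_ext fun x => ?_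
  obtain ⟨y, rfl⟩ := Finite.injective_iff_surjective.1 π.2 x
  exact congrFun (congrArg Subtype.val hgh) y

theorem injective_postcomp {R S T : FIObj} (f : S ⟶ T) :
    Function.Injective fun g : R ⟶ S => g ≫ f := fun _ _ h =>
  hom_ext fun x => f.2 (congrFun (congrArg Subtype.val h) x)

theorem card_addFin_obj (S : FIObj) (a : ℕ) :
    Nat.card ((addFin a).obj S).α = Nat.card S.α + a :=
  Nat.card_sum.trans (congrArg _ (Nat.card_fin a))

theorem exists_comp_eq_addFin_map_inl {S T : FIObj} (f : S ⟶ T) {a : ℕ}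
    (ha : a ≤ Nat.card S.α) :
    ∃ (b c : ℕ) (e : ((addFin a).obj (of (Fin b))).α ≃ S.α)
      (g : T ⟶ (addFin a).obj ((addFin c).obj (of (Fin b)))),
      homOfEquiv e ≫ f ≫ g = (addFin a).map (inl (of (Fin b)) c) := by
  obtain ⟨ι⟩ : Nonempty (Fin a ↪ S.α) := Function.Embedding.nonempty_of_card_le <| by
    rwa [Fintype.card_fin, ← Nat.card_eq_fintype_card]
  obtain ⟨b, e, -⟩ := exists_equiv_sum_fin ι.injective
  obtain ⟨c, e', he'⟩ := exists_equiv_sum_fin f.2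
  refine ⟨b, c, (Equiv.sumComm _ _).trans e.symm, homOfEquiv <| e'.trans <|
    (Equiv.sumCongr e (Equiv.refl _)).trans <| (Equiv.sumAssoc _ _ _).trans (Equiv.sumComm _ _),
    hom_ext fun z => ?_⟩
  change Equiv.sumComm _ _ (Equiv.sumAssoc _ _ _ (Sum.map e id
    (e' (f.1 (e.symm (Sum.swap z)))))) = Sum.map Sum.inl id z
  rw [he', Sum.map_inl, e.apply_symm_apply]
  cases z <;> rfl

end FIObj

section Ring

variable {k : Type u} [Ring k]

namespace FIModule

variable (Q : FIModule.{u, w} k) (D S : FIObj)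

/-- The canonical map from the sum of copies of `Q(D)` indexed by the injections `D → S` to
`Q(S)`. -/
noncomputable def sumAct : ((D ⟶ S) → Q.obj D) →ₗ[k] Q.obj S :=
  ∑ g, Q.act g ∘ₗ LinearMap.proj g

/-- The norm for the action of the permutations of `D` on the source of `Q.sumAct D S`. -/
noncomputable def symmetrize : ((D ⟶ S) → Q.obj D) →ₗ[k] ((D ⟶ S) → Q.obj D) :=
  LinearMap.pi fun g => ∑ π : D ⟶ D, Q.act π ∘ₗ LinearMap.proj (π ≫ g)

variable {Q D S}

theorem sumAct_apply (y : (D ⟶ S) → Q.obj D) : Q.sumAct D S y = ∑ g, Q.act g (y g) := by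
  simp only [sumAct, LinearMap.sum_apply, LinearMap.comp_apply, LinearMap.proj_apply]

theorem symmetrize_apply (y : (D ⟶ S) → Q.obj D) (g : D ⟶ S) :
    Q.symmetrize D S y g = ∑ π : D ⟶ D, Q.act π (y (π ≫ g)) := by
  simp only [symmetrize, LinearMap.pi_apply, LinearMap.sum_apply, LinearMap.comp_apply,
    LinearMap.proj_apply]

theorem sumAct_single [DecidableEq (D ⟶ S)] (g : D ⟶ S) (x : Q.obj D) :
    Q.sumAct D S (Pi.single g x) = Q.act g x := by
  rw [sumAct_apply, Fintype.sum_eq_single g fun h hh => by rw [Pi.single_eq_of_ne hh, map_zero],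
    Pi.single_eq_same]

theorem sumAct_symmetrize (y : (D ⟶ S) → Q.obj D) :
    Q.sumAct D S (Q.symmetrize D S y) = Fintype.card (D ⟶ D) • Q.sumAct D S y := by
  simp only [sumAct_apply, symmetrize_apply, map_sum, ← act_comp]
  rw [Finset.sum_comm, Finset.sum_congr rfl fun π _ =>
    (FIObj.bijective_precomp π).sum_comp fun g => Q.act g (y g), Finset.sum_const, Finset.card_univ]

theorem sumAct_extend {T : FIObj} (f : S ⟶ T) (y : (D ⟶ S) → Q.obj D) :
    Q.sumAct D T (Function.extend (· ≫ f) y 0) = Q.act f (Q.sumAct D S y) := by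
  rw [sumAct_apply, sumAct_apply, map_sum]
  refine (Fintype.sum_of_injective _ (FIObj.injective_postcomp f) _ _ (fun h hh => ?_)
    fun g => ?_).symm
  · rw [Function.extend_apply' _ _ _ hh, Pi.zero_apply, map_zero]
  · rw [(FIObj.injective_postcomp f).extend_apply, act_comp]

theorem symmetrize_extend {T : FIObj} (f : S ⟶ T) (y : (D ⟶ S) → Q.obj D) (g : D ⟶ S) :
    Q.symmetrize D T (Function.extend (· ≫ f) y 0) (g ≫ f) = Q.symmetrize D S y g := by
  simp only [symmetrize_apply, ← Category.assoc, (FIObj.injective_postcomp f).extend_apply]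

theorem proj_comp_comp_act [DecidableEq (D ⟶ S)] {t : Q.obj S →ₗ[k] ((D ⟶ S) → Q.obj D)}
    (ht : ∀ y, t (Q.sumAct D S y) = Q.symmetrize D S y) (g h : D ⟶ S) :
    (LinearMap.proj g ∘ₗ t) ∘ₗ Q.act h = ∑ π : D ⟶ D, if π ≫ g = h then Q.act π else 0 := by
  ext x
  simp only [LinearMap.comp_apply, ← sumAct_single h, ht, LinearMap.proj_apply,
    symmetrize_apply, LinearMap.sum_apply]
  refine Finset.sum_congr rfl fun π _ => ?_
  split_ifs with hπ
  · rw [hπ, Pi.single_eq_same]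
  · rw [Pi.single_eq_of_ne hπ, map_zero, LinearMap.zero_apply]

/-- `Q` is induced from the representation `Q(D)` of the permutations of `D`: every `Q(S)` is the
space of coinvariants of these permutations on the source of `Q.sumAct D S`. In characteristic
zero the elements with zero image in the coinvariants are those killed by the norm. -/
structure IsInduced (Q : FIModule.{u, w} k) (D : FIObj) : Prop where
  surjective_sumAct : ∀ S, Function.Surjective (Q.sumAct D S)
  symmetrize_eq_zero : ∀ {S} {y : (D ⟶ S) → Q.obj D}, Q.sumAct D S y = 0 → Q.symmetrize D S y = 0

/-- All injections out of sufficiently large sets act injectively. -/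
def EventuallyInjective (M : FIModule.{u, w} k) : Prop :=
  ∃ N, ∀ {S T : FIObj} (f : S ⟶ T), N ≤ Nat.card S.α → Function.Injective (M.act f)

theorem EventuallyInjective.of_quotient {M : FIModule.{u, w} k} {N : SubFIModule M}
    (hN : N.toFIModule.EventuallyInjective) (hQ : N.quotient.EventuallyInjective) :
    M.EventuallyInjective := by
  obtain ⟨n, hN⟩ := hN
  obtain ⟨m, hQ⟩ := hQ
  refine ⟨max n m, fun {S T} f hS => (injective_iff_map_eq_zero _).2 fun x hx => ?_⟩
  have hxN : x ∈ N.carrier S := by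
    rw [← Submodule.ker_mkQ (N.carrier S), LinearMap.mem_ker]
    refine (injective_iff_map_eq_zero _).1 (hQ f (le_of_max_le_right hS)) _ ?_
    rw [SubFIModule.quotient_act_mkQ, hx, map_zero]
  exact congrArg Subtype.val <|
    (injective_iff_map_eq_zero _).1 (hN f (le_of_max_le_left hS)) ⟨x, hxN⟩ (Subtype.ext hx)

theorem EventuallyInjective.of_shift {M : FIModule.{u, w} k} {a : ℕ}
    (h : (M.shift a).EventuallyInjective) : M.EventuallyInjective := by
  obtain ⟨N, hN⟩ := h
  refine ⟨N + a, fun {S T} f hS => ?_⟩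
  obtain ⟨b, c, e, g, comp_eq⟩ := FIObj.exists_comp_eq_addFin_map_inl f (le_of_add_le_right hS)
  rw [← Nat.card_congr e, FIObj.card_addFin_obj, Nat.add_le_add_iff_right] at hS
  have comp_injective : Function.Injective (M.act g ∘ M.act f ∘ M.act (FIObj.homOfEquiv e)) := by
    have act_comp_eq : M.act g ∘ M.act f ∘ M.act (FIObj.homOfEquiv e) =
        M.act (FIObj.homOfEquiv e ≫ f ≫ g) := funext fun x => by
      simp only [Function.comp_apply, act_comp]
    rw [act_comp_eq, comp_eq]
    exact hN (FIObj.inl (FIObj.of (Fin b)) c) hS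
  exact (Function.Injective.of_comp_iff' _ (M.act_homOfEquiv_bijective e)).1
    comp_injective.of_comp

end FIModule

end Ring

section Field

variable {k : Type u} [Field k]

namespace FIModule

/-- The representation of the permutations of `S` on `M(S)`. -/
def permRepresentation (M : FIModule.{u, w} k) (S : FIObj) :
    Representation k (Equiv.Perm S.α) (M.obj S) where
  toFun σ := M.act (FIObj.homOfEquiv σ)
  map_one' := LinearMap.ext (M.act_id S)
  map_mul' σ τ := LinearMap.ext (M.act_comp (FIObj.homOfEquiv τ) (FIObj.homOfEquiv σ))

theorem IsInduced.exists_comp_sumAct {Q : FIModule.{u, w} k} {D : FIObj} (hQ : Q.IsInduced D)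
    (S : FIObj) : ∃ t : Q.obj S →ₗ[k] ((D ⟶ S) → Q.obj D),
      ∀ y, t (Q.sumAct D S y) = Q.symmetrize D S y := by
  obtain ⟨s, hs⟩ := (Q.sumAct D S).exists_rightInverse_of_surjective
    (LinearMap.range_eq_top.2 (hQ.surjective_sumAct S))
  refine ⟨Q.symmetrize D S ∘ₗ s, fun y => ?_⟩
  rw [LinearMap.comp_apply, ← sub_eq_zero, ← map_sub]
  refine hQ.symmetrize_eq_zero ?_
  rw [map_sub, ← LinearMap.comp_apply, hs, LinearMap.id_apply, sub_self]

theorem IsInduced.card_mul_trace_act {Q : FIModule.{u, w} k} {D : FIObj} (hQ : Q.IsInduced D)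
    [FiniteDimensional k (Q.obj D)] {S : FIObj} [FiniteDimensional k (Q.obj S)] (σ : S ⟶ S) :
    Fintype.card (D ⟶ D) * LinearMap.trace k (Q.obj S) (Q.act σ) =
      ∑ π : D ⟶ D, Nat.card (EquivariantInjection π.1 σ.1) *
        LinearMap.trace k (Q.obj D) (Q.act π) := by
  classical
  obtain ⟨t, ht⟩ := hQ.exists_comp_sumAct S
  have smul_act : Fintype.card (D ⟶ D) • Q.act σ =
      ∑ g : D ⟶ S, Q.act (g ≫ σ) ∘ₗ (LinearMap.proj g ∘ₗ t) := by
    ext x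
    obtain ⟨y, rfl⟩ := hQ.surjective_sumAct S x
    simp only [LinearMap.smul_apply, LinearMap.sum_apply, LinearMap.comp_apply, ht,
      LinearMap.proj_apply, act_comp]
    rw [← map_nsmul, ← sumAct_symmetrize, sumAct_apply, map_sum]
  rw [← nsmul_eq_mul, ← map_nsmul, smul_act, map_sum]
  simp only [LinearMap.trace_comp_comm' (LinearMap.proj _ ∘ₗ t), proj_comp_comp_act ht, map_sum,
    apply_ite, map_zero]
  rw [Finset.sum_comm]
  refine Finset.sum_congr rfl fun π _ => ?_
  rw [← Finset.sum_filter, Finset.sum_const, nsmul_eq_mul, FIObj.card_filter_comp_eq_comp]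

variable [CharZero k]

theorem card_end_ne_zero (D : FIObj) : (Fintype.card (D ⟶ D) : k) ≠ 0 :=
  Nat.cast_ne_zero.2 (Fintype.card_pos_iff.2 ⟨𝟙 D⟩).ne'

theorem IsInduced.act_injective {Q : FIModule.{u, w} k} {D : FIObj} (hQ : Q.IsInduced D)
    {S T : FIObj} (f : S ⟶ T) : Function.Injective (Q.act f) := by
  refine (injective_iff_map_eq_zero _).2 fun x hx => ?_
  obtain ⟨y, rfl⟩ := hQ.surjective_sumAct S x
  have symmetrize_y : Q.symmetrize D S y = 0 := funext fun g => by
    rw [← symmetrize_extend f, hQ.symmetrize_eq_zero ((sumAct_extend f y).trans hx)]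
    rfl
  have smul_eq := sumAct_symmetrize y
  rw [symmetrize_y, map_zero, ← Nat.cast_smul_eq_nsmul k] at smul_eq
  exact (smul_eq_zero.1 smul_eq.symm).resolve_left (card_end_ne_zero D)

theorem trace_act_mem_fieldRange (M : FIModule.{u, w} k) {S : FIObj}
    [FiniteDimensional k (M.obj S)] (σ : S ⟶ S) :
    LinearMap.trace k (M.obj S) (M.act σ) ∈ (Rat.castHom k).fieldRange :=
  character_mem_fieldRange_of_isConj_pow (M.permRepresentation S)
    isConj_pow_of_coprime_orderOf
    (Equiv.ofBijective σ.1 (Finite.injective_iff_bijective.1 σ.2))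

/-- In large degrees the character of `M` is a polynomial in the numbers of cycles. -/
def HasCharacterPolynomial (M : FIModule.{u, w} k) : Prop :=
  ∃ F ∈ characterPolynomials, ∃ N, ∀ (S : FIObj) (σ : S ⟶ S), N ≤ Nat.card S.α →
    LinearMap.trace k (M.obj S) (M.act σ) = (F S σ : k)

theorem IsInduced.hasCharacterPolynomial {Q : FIModule.{u, w} k} {D : FIObj} (hQ : Q.IsInduced D)
    [∀ S, FiniteDimensional k (Q.obj S)] : Q.HasCharacterPolynomial := by
  choose r hr using fun π : D ⟶ D => RingHom.mem_fieldRange.1 (Q.trace_act_mem_fieldRange π)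
  refine ⟨(Fintype.card (D ⟶ D) : ℚ)⁻¹ • ∑ π : D ⟶ D, r π • fun (S : FIObj) (σ : S ⟶ S) =>
      (Nat.card (EquivariantInjection π.1 σ.1) : ℚ),
    Subalgebra.smul_mem _ (sum_mem fun π _ => Subalgebra.smul_mem _
      (card_equivariantInjection_mem_characterPolynomials π.2) _) _, 0, fun S σ _ => ?_⟩
  refine mul_left_cancel₀ (card_end_ne_zero D) ((hQ.card_mul_trace_act σ).trans ?_)
  simp only [← hr, Pi.smul_apply, Finset.sum_apply, smul_eq_mul, Rat.cast_mul, Rat.cast_inv,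
    Rat.cast_sum, Rat.cast_natCast, eq_ratCast, mul_inv_cancel_left₀ (card_end_ne_zero (k := k) D),
    mul_comm]

theorem HasCharacterPolynomial.of_quotient {M : FIModule.{u, w} k}
    [∀ S, FiniteDimensional k (M.obj S)] {N : SubFIModule M}
    (hN : N.toFIModule.HasCharacterPolynomial) (hQ : N.quotient.HasCharacterPolynomial) :
    M.HasCharacterPolynomial := by
  obtain ⟨F, hF, n, hn⟩ := hN
  obtain ⟨G, hG, m, hm⟩ := hQ
  refine ⟨F + G, add_mem hF hG, max n m, fun S σ hS => ?_⟩
  rw [Pi.add_apply, Pi.add_apply, Rat.cast_add, ← hn S σ (le_of_max_le_left hS),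
    ← hm S σ (le_of_max_le_right hS)]
  exact trace_eq_add_of_exact (N.carrier S).injective_subtype (N.carrier S).mkQ_surjective
    (LinearMap.exact_subtype_mkQ _) rfl rfl

end FIModule

end Field

namespace FIObj

theorem exists_hom_addFin_of_hom {D S : FIObj} (g : D ⟶ S) (a : ℕ) :
    ∃ b ≥ a, ∃ θ : (addFin a).obj S ⟶ (addFin b).obj D,
      ∀ z t, θ.1 z = Sum.inl t ↔ z = Sum.inl (g.1 t) := by
  obtain ⟨b, e, he⟩ := exists_equiv_sum_fin (g ≫ inl S a).2
  have card_eq : Nat.card S.α + a = Nat.card D.α + b :=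
    (card_addFin_obj S a).symm.trans ((Nat.card_congr e).trans (card_addFin_obj D b))
  have card_le : Nat.card D.α ≤ Nat.card S.α := Nat.card_le_card_of_injective g.1 g.2
  refine ⟨b, by omega, ⟨e, e.injective⟩, fun z t => ?_⟩
  rw [← he t]
  exact e.injective.eq_iff

end FIObj

section Ring

variable {k : Type u} [Ring k]

namespace FIModule

variable {M : FIModule.{u, w} k}

theorem IsGeneratedBelow.surjective_sumAct {D : FIObj}
    (hM : M.IsGeneratedBelow (Nat.card D.α + 1))
    (h_zero : ∀ R : FIObj, Nat.card R.α < Nat.card D.α → Subsingleton (M.obj R)) (S : FIObj) :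
    Function.Surjective (M.sumAct D S) := by
  classical
  refine LinearMap.range_eq_top.1 (hM.eq_top_of_act_mem fun R f hR y => ?_)
  obtain hlt | heq := (Nat.lt_succ_iff.1 hR).lt_or_eq
  · have := h_zero R hlt
    rw [Subsingleton.elim y 0, map_zero]
    exact zero_mem _
  · let e : R.α ≃ D.α := (Finite.card_eq.1 heq).some
    refine ⟨Pi.single (FIObj.homOfEquiv e.symm ≫ f) (M.act (FIObj.homOfEquiv e) y), ?_⟩
    rw [sumAct_single, act_comp, act_homOfEquiv_symm]

variable (M) in
/-- The elements of `M(D)` whose image in `M(D ⊔ {1, …, a})` is generated, in the FI-module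
`M.shift a`, by elements of degree less than `|D|`. -/
noncomputable def shiftKernel (D : FIObj) (a : ℕ) : Submodule k (M.obj D) :=
  (((M.shift a).generatedBelow (Nat.card D.α)).carrier D).comap (M.act (FIObj.inl D a))

theorem shiftKernel_mono (D : FIObj) : Monotone (M.shiftKernel D) := fun a b hab x hx => by
  let θ : (FIObj.addFin a).obj D ⟶ (FIObj.addFin b).obj D :=
    ⟨Sum.map id (Fin.castLE hab), Function.injective_id.sumMap (Fin.castLE_injective hab)⟩
  have hθ : ∀ z t, θ.1 z = Sum.inl t → ∃ s, z = Sum.inl s := by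
    rintro (s | j) t h
    · exact ⟨s, rfl⟩
    · cases h
  have act_θ := generatedBelow_shift_le_comap_act hθ hx
  rwa [Submodule.mem_comap, ← act_comp] at act_θ

-- An injection `θ` from `S ⊔ {1, …, a}` to `D ⊔ {1, …, b}` inverting `g₀` sends `g ≫ θ` to a
-- generator of smaller degree unless `g` has the same image as `g₀`.
theorem exists_symmetrize_mem_shiftKernel {D S : FIObj} {a : ℕ} {y : (D ⟶ S) → M.obj D}
    (hy : M.act (FIObj.inl S a) (M.sumAct D S y) ∈
      ((M.shift a).generatedBelow (Nat.card D.α)).carrier S) (g₀ : D ⟶ S) :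
    ∃ b ≥ a, M.symmetrize D S y g₀ ∈ M.shiftKernel D b := by
  obtain ⟨b, hab, θ, hθ⟩ := FIObj.exists_hom_addFin_of_hom g₀ a
  refine ⟨b, hab, ?_⟩
  let P := ((M.shift b).generatedBelow (Nat.card D.α)).carrier D
  have act_θ_mem := generatedBelow_shift_le_comap_act (fun z t h => ⟨g₀.1 t, (hθ z t).1 h⟩) hy
  have mem_of_notMem_range (g : D ⟶ S) (hg : g ∉ Set.range fun π : D ⟶ D => π ≫ g₀) :
      M.act (g ≫ FIObj.inl S a ≫ θ) (y g) ∈ P := by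
    by_cases h : ∀ i, ∃ t, (g ≫ FIObj.inl S a ≫ θ).1 i = Sum.inl t
    · choose π hπ using fun i => h i
      have factors (i : D.α) : g₀.1 (π i) = g.1 i :=
        (Sum.inl_injective ((hθ _ _).1 (hπ i))).symm
      exact absurd ⟨⟨π, fun i j hij => g.2 (by rw [← factors, ← factors, hij])⟩,
        FIObj.hom_ext factors⟩ hg
    · obtain ⟨i, hi⟩ := not_forall.1 h
      exact act_mem_generatedBelow_shift_of_notMem le_rfl hi _
  have comp_θ (π : D ⟶ D) : (π ≫ g₀) ≫ FIObj.inl S a ≫ θ = π ≫ FIObj.inl D b :=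
    FIObj.hom_ext fun i => (hθ _ _).2 rfl
  have sum_eq : P.mkQ (M.act (FIObj.inl D b) (M.symmetrize D S y g₀)) =
      P.mkQ (M.act θ (M.act (FIObj.inl S a) (M.sumAct D S y))) := by
    simp only [sumAct_apply, symmetrize_apply, map_sum, ← act_comp]
    refine Fintype.sum_of_injective _ (FIObj.injective_postcomp g₀) _ _ (fun g hg => ?_)
      fun π => ?_
    · exact (Submodule.Quotient.mk_eq_zero P).2 (mem_of_notMem_range g hg)
    · rw [← comp_θ, Category.assoc (π ≫ g₀)]
  exact (Submodule.Quotient.mk_eq_zero P).1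
    (sum_eq.trans ((Submodule.Quotient.mk_eq_zero P).2 act_θ_mem))

theorem isInduced_quotient_generatedBelow_shift {D : FIObj} {a : ℕ}
    (hM : M.IsGeneratedBelow (Nat.card D.α + 1))
    (h_stable : ∀ b ≥ a, M.shiftKernel D a = M.shiftKernel D b) :
    ((M.shift a).generatedBelow (Nat.card D.α)).quotient.IsInduced D := by
  let L := (M.shift a).generatedBelow (Nat.card D.α)
  let proj (S : FIObj) : M.obj S →ₗ[k] L.quotient.obj S :=
    (L.carrier S).mkQ ∘ₗ M.act (FIObj.inl S a)
  have proj_act {S T : FIObj} (f : S ⟶ T) (x : M.obj S) :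
      proj T (M.act f x) = L.quotient.act f (proj S x) :=
    congrArg (L.carrier T).mkQ (M.act_inl_act f a x)
  have proj_eq_zero_iff {S : FIObj} {x : M.obj S} :
      proj S x = 0 ↔ M.act (FIObj.inl S a) x ∈ L.carrier S := Submodule.Quotient.mk_eq_zero _
  have proj_surjective (q : L.quotient.obj D) : ∃ x, proj D x = q := by
    obtain ⟨v, rfl⟩ := (L.carrier D).mkQ_surjective q
    obtain ⟨l, hl, _, ⟨x, rfl⟩, rfl⟩ := Submodule.mem_sup.1
      (hM.generatedBelow_shift_sup_range_act_inl a D ▸ Submodule.mem_top : v ∈ _)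
    exact ⟨x, (Submodule.Quotient.eq' _).2 (by rwa [add_comm, add_neg_cancel_right])⟩
  refine ⟨((hM.shift a).quotient L).surjective_sumAct fun R hR => ?_, fun {S y} hy => ?_⟩
  · exact Submodule.Quotient.subsingleton_iff.2
      (Submodule.eq_top_iff'.2 (mem_generatedBelow_of_card_lt hR))
  · choose x hx using fun g => proj_surjective (y g)
    obtain rfl : (fun g => proj D (x g)) = y := funext hx
    have sumAct_x : proj S (M.sumAct D S x) = 0 := by
      rw [sumAct_apply] at hy
      simpa only [sumAct_apply, map_sum, proj_act] using hy
    funext g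
    obtain ⟨b, hb, hg⟩ := exists_symmetrize_mem_shiftKernel (proj_eq_zero_iff.1 sumAct_x) g
    rw [← h_stable b hb] at hg
    simpa only [symmetrize_apply, map_sum, proj_act, Pi.zero_apply] using proj_eq_zero_iff.2 hg

theorem exists_isInduced_quotient_generatedBelow_shift {D : FIObj} [IsNoetherian k (M.obj D)]
    (hM : M.IsGeneratedBelow (Nat.card D.α + 1)) :
    ∃ a, ((M.shift a).generatedBelow (Nat.card D.α)).quotient.IsInduced D :=
  let ⟨a, ha⟩ := monotone_stabilizes_iff_noetherian.2 ‹_› ⟨_, M.shiftKernel_mono D⟩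
  ⟨a, isInduced_quotient_generatedBelow_shift hM ha⟩

variable (M) in
/-- The image of the natural map `M → M.shift a`. -/
def rangeInl (a : ℕ) : SubFIModule (M.shift a) where
  carrier S := LinearMap.range (M.act (FIObj.inl S a))
  le_comap f := by
    rintro _ ⟨x, rfl⟩
    exact ⟨M.act f x, M.act_inl_act f a x⟩

variable (M) in
/-- Some finite family of elements of `M` lies in no proper sub-FI-module. -/
def FinitelyGenerated : Prop :=
  ∃ (r : ℕ) (S : Fin r → FIObj) (m : ∀ i, M.obj (S i)),
    ∀ N : SubFIModule M, (∀ i, m i ∈ N.carrier (S i)) → ∀ T, N.carrier T = ⊤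

theorem FinitelyGenerated.exists_isGeneratedBelow (hM : M.FinitelyGenerated) :
    ∃ d, M.IsGeneratedBelow d := by
  obtain ⟨r, S, m, h⟩ := hM
  exact ⟨Finset.univ.sup (fun i => Nat.card (S i).α) + 1, h _ fun i =>
    mem_generatedBelow_of_card_lt (Nat.lt_succ_of_le
      (Finset.le_sup (f := fun i => Nat.card (S i).α) (Finset.mem_univ i))) (m i)⟩

theorem FinitelyGenerated.finite (hM : M.FinitelyGenerated) (T : FIObj) :
    Module.Finite k (M.obj T) := by
  obtain ⟨r, S, m, h⟩ := hM
  let N : SubFIModule M :=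
    { carrier := fun T => Submodule.span k (Set.range fun p : Σ i, (S i ⟶ T) => M.act p.2 (m p.1))
      le_comap := fun {T U} f => Submodule.span_le.2 <| by
        rintro _ ⟨⟨i, g⟩, rfl⟩
        exact Submodule.subset_span ⟨⟨i, g ≫ f⟩, M.act_comp g f (m i)⟩ }
  have generators_mem (i : Fin r) : m i ∈ N.carrier (S i) :=
    Submodule.subset_span ⟨⟨i, 𝟙 _⟩, M.act_id (S i) (m i)⟩
  exact Module.finite_def.2 (h N generators_mem T ▸ Submodule.fg_span (Set.finite_range _))

end FIModule

end Ring

section Field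

variable {k : Type u} [Field k] [CharZero k]

namespace FIModule

variable {M : FIModule.{u, w} k}

theorem HasCharacterPolynomial.of_shift [∀ S, FiniteDimensional k (M.obj S)] {a : ℕ}
    (h_inj : M.EventuallyInjective) (h_shift : (M.shift a).HasCharacterPolynomial)
    (h_coker : (M.rangeInl a).quotient.HasCharacterPolynomial) : M.HasCharacterPolynomial := by
  obtain ⟨n, hn⟩ := h_inj
  obtain ⟨F, hF, m, hm⟩ := h_shift
  obtain ⟨G, hG, l, hl⟩ := h_coker
  refine ⟨F - G, sub_mem hF hG, n + m + l, fun S σ hS => ?_⟩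
  rw [Pi.sub_apply, Pi.sub_apply, Rat.cast_sub, ← hm S σ (by omega), ← hl S σ (by omega),
    eq_sub_iff_add_eq]
  exact (trace_eq_add_of_exact (hn (FIObj.inl S a) (by omega))
    (Submodule.mkQ_surjective _) (LinearMap.exact_iff.2 (Submodule.ker_mkQ _))
    (LinearMap.ext fun x => (M.act_inl_act σ a x).symm) rfl).symm

theorem IsGeneratedBelow.eventuallyInjective_and_hasCharacterPolynomial {d : ℕ}
    (hM : M.IsGeneratedBelow d) [∀ S, FiniteDimensional k (M.obj S)] :
    M.EventuallyInjective ∧ M.HasCharacterPolynomial := by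
  induction d generalizing M with
  | zero =>
    have := hM.subsingleton
    refine ⟨⟨0, fun f _ => Function.injective_of_subsingleton _⟩, 0, zero_mem _, 0, fun S σ _ => ?_⟩
    rw [Subsingleton.elim (M.act σ) 0, map_zero, Pi.zero_apply, Pi.zero_apply, Rat.cast_zero]
  | succ d ih =>
    obtain ⟨D, rfl⟩ : ∃ D : FIObj, Nat.card D.α = d := ⟨FIObj.of (Fin d), Nat.card_fin d⟩
    obtain ⟨a, hQ⟩ := exists_isInduced_quotient_generatedBelow_shift hM
    have (S : FIObj) : FiniteDimensional k ((M.shift a).obj S) :=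
      inferInstanceAs (FiniteDimensional k (M.obj _))
    obtain ⟨hL_inj, hL_char⟩ := ih (isGeneratedBelow_toFIModule_generatedBelow (M.shift a) _)
    obtain ⟨-, hC_char⟩ := ih (M := (M.rangeInl a).quotient)
      (isGeneratedBelow_quotient_of_sup_eq_top (hM.generatedBelow_shift_sup_range_act_inl a))
    have h_inj : M.EventuallyInjective := .of_shift
      (.of_quotient hL_inj ⟨0, fun f _ => hQ.act_injective f⟩)
    exact ⟨h_inj, .of_shift h_inj (.of_quotient hL_char hQ.hasCharacterPolynomial) hC_char⟩

theorem FinitelyGenerated.hasCharacterPolynomial (hM : M.FinitelyGenerated) :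
    M.HasCharacterPolynomial := by
  have := hM.finite
  obtain ⟨d, hd⟩ := hM.exists_isGeneratedBelow
  exact hd.eventuallyInjective_and_hasCharacterPolynomial.2

end FIModule

end Field

theorem cycleCount_homOfEquiv {α : Type} [Fintype α] [DecidableEq α] (σ : Equiv.Perm α) {l : ℕ}
    (hl : l ≠ 0) :
    cycleCount l (FIObj.of α) (FIObj.homOfEquiv σ) = σ.partition.parts.count l := by
  rw [cycleCount, div_eq_iff (Nat.cast_ne_zero.2 hl), mul_comm]
  have h := card_minimalPeriod_eq_mul_count_partition σ l
  rw [← Set.ncard_coe_finset, Finset.coe_filter_univ] at h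
  exact_mod_cast h

theorem exists_rename_fin_val_eq {R : Type*} [CommSemiring R] (P : MvPolynomial ℕ R) :
    ∃ (n : ℕ) (X : MvPolynomial (Fin n) R), MvPolynomial.rename Fin.val X = P :=
  ⟨P.vars.sup id + 1, P.exists_rename_eq_of_vars_subset_range _ Fin.val_injective fun i hi =>
    ⟨⟨i, Nat.lt_succ_of_le (Finset.le_sup (f := id) hi)⟩, rfl⟩⟩

theorem exists_eval_eq_of_mem_characterPolynomials {F : ∀ S : FIObj, (S ⟶ S) → ℚ}
    (hF : F ∈ characterPolynomials) : ∃ (n : ℕ) (X : MvPolynomial (Fin n) ℚ), ∀ S σ,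
      F S σ = MvPolynomial.eval (fun i : Fin n => cycleCount (i.val + 1) S σ) X := by
  rw [characterPolynomials, Algebra.adjoin_range_eq_range_aeval] at hF
  obtain ⟨P, rfl⟩ := hF
  obtain ⟨n, X, rfl⟩ := exists_rename_fin_val_eq P
  refine ⟨n, X, fun S σ => ?_⟩
  let evalAt : (∀ S : FIObj, (S ⟶ S) → ℚ) →ₐ[ℚ] ℚ :=
    (Pi.evalAlgHom ℚ _ σ).comp (Pi.evalAlgHom ℚ (fun S : FIObj => (S ⟶ S) → ℚ) S)
  calc evalAt (MvPolynomial.aeval (fun i => cycleCount (i + 1)) (MvPolynomial.rename Fin.val X))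
      = evalAt (MvPolynomial.aeval (fun i : Fin n => cycleCount (i.val + 1)) X) := by
        rw [MvPolynomial.aeval_rename]
        rfl
    _ = MvPolynomial.eval (fun i : Fin n => cycleCount (i.val + 1) S σ) X := by
        rw [MvPolynomial.comp_aeval_apply, ← MvPolynomial.coe_aeval_eq_eval]
        rfl

theorem fg_FIMod_character_polynomial_general {k : Type u} [Field k] [CharZero k]
    (M : FIModule.{u, w} k) (hM : M.FinitelyGenerated) :
    ∃ (n N : ℕ) (X : MvPolynomial (Fin n) ℚ),
      ∀ (α : Type) [Fintype α] [DecidableEq α] (σ : Equiv.Perm α), N < Fintype.card α →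
        LinearMap.trace k (M.obj (FIObj.of α)) (M.act (FIObj.homOfEquiv σ)) =
          algebraMap ℚ k (MvPolynomial.eval
            (fun i : Fin n => (Multiset.count (i.val + 1) σ.partition.parts : ℚ)) X) := by
  obtain ⟨F, hF, N, hN⟩ := hM.hasCharacterPolynomial
  obtain ⟨n, X, hX⟩ := exists_eval_eq_of_mem_characterPolynomials hF
  refine ⟨n, N, X, fun α _ _ σ hα => ?_⟩
  rw [hN _ _ (hα.le.trans_eq (Nat.card_eq_fintype_card (α := α)).symm), hX, eq_ratCast]
  simp only [cycleCount_homOfEquiv σ (Nat.succ_ne_zero _)]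

/-- Character polynomials: for a finitely generated FI-module M there
are n, N and a polynomial X in variables `a_1, …, a_n` (variable `i : Fin n`
representing `a_{i+1}`) such that for any permutation σ of `{1,…,k}` with `k > N` of
cycle type μ, the trace of σ on `M_k` is `X(m_1(μ), …, m_n(μ))`, where `m_j(μ)` is the
number of parts of μ equal to j. -/
theorem fg_FIMod_character_polynomial (M : FIMod) (hM : FIMod.FG M) :
    ∃ (n N : ℕ) (X : MvPolynomial (Fin n) ℚ),
      ∀ (k : ℕ) (σ : Equiv.Perm (Fin k)), N < k →
        traceOfPerm M k σ =
          algebraMap ℚ ℂ (MvPolynomial.eval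
            (fun i : Fin n => (Multiset.count (i.val + 1) σ.partition.parts : ℚ)) X) := by
  obtain ⟨r, S, m, h⟩ := hM
  obtain ⟨n, N, X, hX⟩ := fg_FIMod_character_polynomial_general M
    ⟨r, S, m, fun P => h ⟨P.carrier, fun f _ hx => P.le_comap f hx⟩⟩
  exact ⟨n, N, X, fun k σ hk => hX (Fin k) σ (by rwa [Fintype.card_fin])⟩
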